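/- Let σ ∈ (0,1] and σ₁ := 1+σ, and define f₁(r) := σ^{−1}·(E(2r) − σ₁·e^{2σr}·E(2σ₁r)). Then for every r > 0, f₁'(r) = e^{−2r}/r − 2·σ₁·e^{2σr}·E(2σ₁r) > 0 (so f₁ is strictly increasing), and for every r ≥ 5/2 one has −1/6500 < f₁(r) < 0. -/

import Mathlib

/-!
The derivative formula is the product and chain rule together with `E'(x) = -e^{-x}/x`; the two
terms in `e^{-2r}/r` combine because `e^{2σr} e^{-2(1+σ)r} = e^{-2r}`. Its positivity is then
`E(x) < e^{-x}/x` at `x = 2(1+σ)r`. Since `f₁` is strictly increasing and tends to `0` at infinity,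
it is negative.

By monotonicity the lower bound only has to be checked at `r = 5/2`. There
`f₁(5/2) = -(g(σ) - g(0))/σ` with `g(s) = (1+s) e^{5s} E(5(1+s))`, so it is enough that
`g' < 1/6500` on `[0, 1]`. With `x = 5(1+s)`,
`g'(s) = e^{-5} ((x+1) e^x E(x) - 1)`. The required precision (about one part in `3000` on
`e^5 E(5)`) comes from the rational bound `E(x) < e^{-x} R(x)` (`expInt_lt_ratBound`), where `R` is a
convergent of the continued fraction of `e^x E(x)`. As `R' - R + 1/x = -144/(xQ)²` with `Q` the
cubic in the denominator of `R`, the difference `e^{-x} R(x) - E(x)` decreases to `0`, hence is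
positive.
-/

open Real Set Filter MeasureTheory

/-- `E x = ∫_x^∞ e^{-t}/t dt`, so that `Ei(-x) = -E x` for `x > 0`. -/
noncomputable def expInt (x : ℝ) : ℝ := ∫ t in Set.Ioi x, Real.exp (-t) / t

/-- `f₁(r) = σ⁻¹ (E(2r) - (1+σ) e^{2σr} E(2(1+σ)r))`. -/
noncomputable def f1 (σ r : ℝ) : ℝ :=
  σ⁻¹ * (expInt (2 * r) - (1 + σ) * Real.exp (2 * σ * r) * expInt (2 * (1 + σ) * r))

open Topology

/-! ### The exponential integral -/

lemma integrableOn_exp_neg_div {a : ℝ} (ha : 0 < a) :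
    IntegrableOn (fun t : ℝ => Real.exp (-t) / t) (Set.Ioi a) := by
  refine Integrable.mono' ((integrableOn_exp_neg_Ioi a).div_const a) ?_ ?_
  · exact (by fun_prop : Measurable fun t : ℝ => Real.exp (-t) / t).aestronglyMeasurable
  · filter_upwards [ae_restrict_mem measurableSet_Ioi] with t ht
    have ht' : a < t := ht
    have : 0 < t := ha.trans ht'
    rw [Real.norm_of_nonneg (by positivity)]
    gcongr

lemma expInt_nonneg {x : ℝ} (hx : 0 < x) : 0 ≤ expInt x := by
  refine setIntegral_nonneg measurableSet_Ioi fun t ht => ?_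
  have : 0 < t := hx.trans ht
  positivity

lemma expInt_le {x : ℝ} (hx : 0 < x) : expInt x ≤ Real.exp (-x) / x := by
  rw [← integral_exp_neg_Ioi x, ← integral_div]
  refine setIntegral_mono_on (integrableOn_exp_neg_div hx)
    ((integrableOn_exp_neg_Ioi x).div_const x) measurableSet_Ioi fun t ht => ?_
  have ht' : x < t := ht
  gcongr

lemma hasDerivAt_expInt {x : ℝ} (hx : 0 < x) :
    HasDerivAt expInt (-(Real.exp (-x) / x)) x := by
  have hx2 : 0 < x / 2 := by positivity
  have hcont : ContinuousAt (fun t : ℝ => Real.exp (-t) / t) x := by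
    have := hx.ne'
    fun_prop (disch := assumption)
  have hint : IntervalIntegrable (fun t : ℝ => Real.exp (-t) / t) volume (x / 2) x := by
    rw [intervalIntegrable_iff_integrableOn_Ioc_of_le (by linarith)]
    exact (integrableOn_exp_neg_div hx2).mono_set Ioc_subset_Ioi_self
  have hd : HasDerivAt (fun u => ∫ t in (x / 2)..u, Real.exp (-t) / t) (Real.exp (-x) / x) x :=
    intervalIntegral.integral_hasDerivAt_right hint
      (by fun_prop : Measurable fun t : ℝ => Real.exp (-t) / t).stronglyMeasurable.stronglyMeasurableAtFilter
      hcont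
  refine (hd.const_sub (expInt (x / 2))).congr_of_eventuallyEq ?_
  filter_upwards [lt_mem_nhds hx] with u hu
  have := intervalIntegral.integral_interval_add_Ioi (integrableOn_exp_neg_div hx2)
    (integrableOn_exp_neg_div hu)
  simp only [expInt]
  linarith

lemma tendsto_exp_neg_div : Tendsto (fun x : ℝ => Real.exp (-x) / x) atTop (𝓝 0) :=
  (tendsto_exp_neg_atTop_nhds_zero).div_atTop tendsto_id

lemma tendsto_expInt : Tendsto expInt atTop (𝓝 0) := by
  refine squeeze_zero' ?_ ?_ tendsto_exp_neg_div
  · filter_upwards [eventually_gt_atTop 0] with x hx using expInt_nonneg hx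
  · filter_upwards [eventually_gt_atTop 0] with x hx using expInt_le hx

/-- A strictly decreasing function on `(0, ∞)` with limit `0` at infinity is positive. -/
lemma pos_of_strictAntiOn_tendsto {F : ℝ → ℝ} (hF : StrictAntiOn F (Set.Ioi 0))
    (hlim : Tendsto F atTop (𝓝 0)) {x : ℝ} (hx : 0 < x) : 0 < F x := by
  have h1 : F (x + 1) < F x := hF hx (by simp only [Set.mem_Ioi]; linarith) (by linarith)
  refine lt_of_le_of_lt (le_of_tendsto hlim ?_) h1
  filter_upwards [eventually_ge_atTop (x + 1)] with y hy
  exact hF.antitoneOn (by simp only [Set.mem_Ioi]; linarith)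
    (by simp only [Set.mem_Ioi]; linarith) hy

/-! ### A rational upper bound -/

/-- The convergent
`(1/x) (1 - 1/(x+2 - 2/(x+4 - 6/(x+6))))` of the continued fraction of `e^x E(x)`, as a quotient of
polynomials. -/
noncomputable def ratBound (x : ℝ) : ℝ :=
  (x ^ 3 + 11 * x ^ 2 + 26 * x + 6) / (x * (x ^ 3 + 12 * x ^ 2 + 36 * x + 24))

lemma ratBound_lt {x : ℝ} (hx : 0 < x) : ratBound x < 1 / x := by
  unfold ratBound
  rw [div_lt_div_iff₀ (by positivity) hx]
  have : 0 < x * (x ^ 2 + 10 * x + 18) := by positivity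
  nlinarith [mul_pos hx this]

lemma ratBound_nonneg {x : ℝ} (hx : 0 < x) : 0 ≤ ratBound x := by
  unfold ratBound
  positivity

lemma hasDerivAt_exp_mul_ratBound_sub {x : ℝ} (hx : 0 < x) :
    HasDerivAt (fun y => Real.exp (-y) * ratBound y - expInt y)
      (-(144 * Real.exp (-x) / (x * (x ^ 3 + 12 * x ^ 2 + 36 * x + 24)) ^ 2)) x := by
  have hN : HasDerivAt (fun y : ℝ => y ^ 3 + 11 * y ^ 2 + 26 * y + 6)
      (3 * x ^ 2 + 22 * x + 26) x := by
    have := ((((hasDerivAt_id x).pow 3).add (((hasDerivAt_id x).pow 2).const_mul 11)).add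
      ((hasDerivAt_id x).const_mul 26)).add_const 6
    refine this.congr_deriv ?_
    simp
    ring
  have hD : HasDerivAt (fun y : ℝ => y * (y ^ 3 + 12 * y ^ 2 + 36 * y + 24))
      (4 * x ^ 3 + 36 * x ^ 2 + 72 * x + 24) x := by
    have := (hasDerivAt_id x).mul (((((hasDerivAt_id x).pow 3).add
      (((hasDerivAt_id x).pow 2).const_mul 12)).add
      ((hasDerivAt_id x).const_mul 36)).add_const 24)
    refine this.congr_deriv ?_
    simp
    ring
  have hne : x * (x ^ 3 + 12 * x ^ 2 + 36 * x + 24) ≠ 0 := by positivity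
  have he : HasDerivAt (fun y : ℝ => Real.exp (-y)) (-Real.exp (-x)) x := by
    simpa using (hasDerivAt_neg x).exp
  refine ((he.mul (hN.div hD hne)).sub (hasDerivAt_expInt hx)).congr_deriv ?_
  have h2 : x ^ 3 + 12 * x ^ 2 + 36 * x + 24 ≠ 0 := by positivity
  simp only [Pi.div_apply]
  field_simp
  ring

lemma expInt_lt_ratBound {x : ℝ} (hx : 0 < x) : expInt x < Real.exp (-x) * ratBound x := by
  have hanti : StrictAntiOn (fun y => Real.exp (-y) * ratBound y - expInt y) (Set.Ioi 0) := by
    refine strictAntiOn_of_deriv_neg (convex_Ioi 0)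
      (fun y hy => (hasDerivAt_exp_mul_ratBound_sub hy).continuousAt.continuousWithinAt) ?_
    intro y hy
    rw [interior_Ioi] at hy
    have hy' : 0 < y := hy
    rw [(hasDerivAt_exp_mul_ratBound_sub hy').deriv, neg_lt_zero]
    positivity
  have hlim : Tendsto (fun y => Real.exp (-y) * ratBound y - expInt y) atTop (𝓝 0) := by
    have h1 : Tendsto (fun y => Real.exp (-y) * ratBound y) atTop (𝓝 0) := by
      refine squeeze_zero' ?_ ?_ tendsto_exp_neg_div
      · filter_upwards [eventually_gt_atTop 0] with y hy
        exact mul_nonneg (Real.exp_pos _).le (ratBound_nonneg hy)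
      · filter_upwards [eventually_gt_atTop 0] with y hy
        rw [div_eq_mul_one_div]
        exact mul_le_mul_of_nonneg_left (ratBound_lt hy).le (Real.exp_pos _).le
    simpa using h1.sub tendsto_expInt
  exact sub_pos.mp (pos_of_strictAntiOn_tendsto hanti hlim hx)

lemma expInt_lt {x : ℝ} (hx : 0 < x) : expInt x < Real.exp (-x) / x := by
  refine (expInt_lt_ratBound hx).trans ?_
  rw [div_eq_mul_one_div]
  exact mul_lt_mul_of_pos_left (ratBound_lt hx) (Real.exp_pos _)

/-- The bound on `(x e^x E(x))'` supplied by `expInt_lt_ratBound`; equality holds at `x = 5`. -/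
lemma ratBound_slope_le {x : ℝ} (hx : 5 ≤ x) : (x + 1) * ratBound x - 1 ≤ 71 / 3145 := by
  have h0 : 0 < x := by linarith
  have h2 : x ^ 3 + 12 * x ^ 2 + 36 * x + 24 ≠ 0 := by positivity
  have h : (x + 1) * ratBound x - 1
      = (x ^ 2 + 8 * x + 6) / (x * (x ^ 3 + 12 * x ^ 2 + 36 * x + 24)) := by
    unfold ratBound
    field_simp
    ring
  rw [h, div_le_div_iff₀ (by positivity) (by norm_num)]
  obtain ⟨y, rfl⟩ : ∃ y, x = y + 5 := ⟨x - 5, by ring⟩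
  have hy : 0 ≤ y := by linarith
  have h3 : 0 ≤ y ^ 2 := by positivity
  have h4 : 0 ≤ y ^ 3 := by positivity
  have h5 : 0 ≤ y ^ 4 := by positivity
  nlinarith

/-! ### Monotonicity and sign -/

lemma hasDerivAt_f1 {σ r : ℝ} (hσ : 0 < σ) (hr : 0 < r) :
    HasDerivAt (f1 σ) (Real.exp (-2 * r) / r
      - 2 * (1 + σ) * Real.exp (2 * σ * r) * expInt (2 * (1 + σ) * r)) r := by
  have h1 : HasDerivAt (fun y => expInt (2 * y)) (-(Real.exp (-(2 * r)) / (2 * r)) * (2 * 1)) r :=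
    (hasDerivAt_expInt (by positivity : 0 < 2 * r)).comp r ((hasDerivAt_id r).const_mul 2)
  have h2 : HasDerivAt (fun y => expInt (2 * (1 + σ) * y))
      (-(Real.exp (-(2 * (1 + σ) * r)) / (2 * (1 + σ) * r)) * (2 * (1 + σ) * 1)) r :=
    (hasDerivAt_expInt (by positivity : 0 < 2 * (1 + σ) * r)).comp r
      ((hasDerivAt_id r).const_mul (2 * (1 + σ)))
  have h3 : HasDerivAt (fun y => (1 + σ) * Real.exp (2 * σ * y))
      ((1 + σ) * (Real.exp (2 * σ * r) * (2 * σ * 1))) r :=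
    (((hasDerivAt_id r).const_mul (2 * σ)).exp).const_mul (1 + σ)
  refine ((h1.sub (h3.mul h2)).const_mul σ⁻¹).congr_deriv ?_
  have he : Real.exp (2 * σ * r) * Real.exp (-(2 * (1 + σ) * r)) = Real.exp (-2 * r) := by
    rw [← Real.exp_add]
    ring_nf
  have he2 : Real.exp (-(2 * r)) = Real.exp (-2 * r) := by ring_nf
  have hσ1 : 1 + σ ≠ 0 := by positivity
  rw [he2, ← he]
  generalize Real.exp (2 * σ * r) = A
  generalize Real.exp (-(2 * (1 + σ) * r)) = B
  field_simp
  ring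

lemma exp_mul_expInt_lt {σ r : ℝ} (hσ : 0 < σ) (hr : 0 < r) :
    2 * (1 + σ) * Real.exp (2 * σ * r) * expInt (2 * (1 + σ) * r) < Real.exp (-2 * r) / r := by
  have he : Real.exp (2 * σ * r) * Real.exp (-(2 * (1 + σ) * r)) = Real.exp (-2 * r) := by
    rw [← Real.exp_add]
    ring_nf
  calc _ < 2 * (1 + σ) * Real.exp (2 * σ * r)
        * (Real.exp (-(2 * (1 + σ) * r)) / (2 * (1 + σ) * r)) :=
        mul_lt_mul_of_pos_left (expInt_lt (by positivity)) (by positivity)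
    _ = _ := by
        rw [← he]
        field_simp

lemma strictMonoOn_f1 {σ : ℝ} (hσ : 0 < σ) : StrictMonoOn (f1 σ) (Set.Ioi 0) := by
  refine strictMonoOn_of_deriv_pos (convex_Ioi 0)
    (fun y hy => (hasDerivAt_f1 hσ hy).continuousAt.continuousWithinAt) ?_
  intro y hy
  rw [interior_Ioi] at hy
  rw [(hasDerivAt_f1 hσ hy).deriv]
  exact sub_pos.mpr (exp_mul_expInt_lt hσ hy)

lemma tendsto_f1 {σ : ℝ} (hσ : 0 < σ) : Tendsto (f1 σ) atTop (𝓝 0) := by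
  have h2r : Tendsto (fun r : ℝ => 2 * r) atTop atTop :=
    tendsto_id.const_mul_atTop (by norm_num)
  have h1 : Tendsto (fun r => expInt (2 * r)) atTop (𝓝 0) := tendsto_expInt.comp h2r
  have h2 : Tendsto (fun r => (1 + σ) * Real.exp (2 * σ * r) * expInt (2 * (1 + σ) * r))
      atTop (𝓝 0) := by
    refine squeeze_zero' ?_ ?_ (tendsto_exp_neg_div.comp h2r)
    · filter_upwards [eventually_gt_atTop 0] with r hr
      have := expInt_nonneg (by positivity : 0 < 2 * (1 + σ) * r)
      positivity
    · filter_upwards [eventually_gt_atTop 0] with r hr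
      have h := exp_mul_expInt_lt hσ hr
      have e : Real.exp (-(2 * r)) / (2 * r) = (Real.exp (-2 * r) / r) / 2 := by
        rw [div_div]
        ring_nf
      simp only [Function.comp_apply]
      rw [e]
      linarith
  have h := (h1.sub h2).const_mul σ⁻¹
  rw [sub_zero, mul_zero] at h
  exact h

lemma f1_neg {σ r : ℝ} (hσ : 0 < σ) (hr : 0 < r) : f1 σ r < 0 := by
  have h := pos_of_strictAntiOn_tendsto (F := fun y => -f1 σ y) (strictMonoOn_f1 hσ).neg
    (by simpa using (tendsto_f1 hσ).neg) hr
  simpa using h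

/-! ### The lower bound at `r = 5/2` -/

lemma exp_neg_five_mul_lt : Real.exp (-5) * (71 / 3145) < 1 / 6500 := by
  have h : (2.718 : ℝ) ^ 5 ≤ Real.exp 5 := by
    have h1 : Real.exp 5 = Real.exp 1 ^ 5 := by
      rw [← Real.exp_nat_mul]
      norm_num
    rw [h1]
    have := Real.exp_one_gt_d9
    gcongr
    linarith
  rw [Real.exp_neg, inv_mul_eq_div, div_lt_div_iff₀ (Real.exp_pos _) (by norm_num)]
  norm_num at h ⊢
  linarith

/-- The function whose difference quotient at `0` with step `σ` is `-f1 σ (5/2)`. -/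
noncomputable def slopeFun (s : ℝ) : ℝ := (1 + s) * Real.exp (5 * s) * expInt (5 * (1 + s))

lemma hasDerivAt_slopeFun {s : ℝ} (hs : -1 < s) :
    HasDerivAt slopeFun
      (Real.exp (5 * s) * expInt (5 * (1 + s)) * (5 * (1 + s) + 1) - Real.exp (-5)) s := by
  have hs1 : 0 < 1 + s := by linarith
  have h0 : HasDerivAt (fun y : ℝ => 1 + y) 1 s := (hasDerivAt_id s).const_add 1
  have h1 : HasDerivAt (fun y : ℝ => Real.exp (5 * y)) (Real.exp (5 * s) * (5 * 1)) s :=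
    ((hasDerivAt_id s).const_mul 5).exp
  have h2 : HasDerivAt (fun y => expInt (5 * (1 + y)))
      (-(Real.exp (-(5 * (1 + s))) / (5 * (1 + s))) * (5 * 1)) s :=
    HasDerivAt.comp (h₂ := expInt) (h := fun y : ℝ => 5 * (1 + y)) s
      (hasDerivAt_expInt (mul_pos (by norm_num) hs1)) (h0.const_mul 5)
  refine ((h0.mul h1).mul h2).congr_deriv ?_
  have he : Real.exp (-5) = Real.exp (5 * s) * Real.exp (-(5 * (1 + s))) := by
    rw [← Real.exp_add]
    ring_nf
  rw [he]
  simp only [Pi.mul_apply]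
  field_simp
  ring

lemma slopeFun_deriv_lt {s : ℝ} (hs : 0 ≤ s) :
    Real.exp (5 * s) * expInt (5 * (1 + s)) * (5 * (1 + s) + 1) - Real.exp (-5) < 1 / 6500 := by
  have hs1 : 0 < 1 + s := by linarith
  have he : Real.exp (5 * s) * Real.exp (-(5 * (1 + s))) = Real.exp (-5) := by
    rw [← Real.exp_add]
    ring_nf
  have h1 := expInt_lt_ratBound (by positivity : 0 < 5 * (1 + s))
  have h2 := ratBound_slope_le (by linarith : 5 ≤ 5 * (1 + s))
  calc _ ≤ Real.exp (5 * s) * (Real.exp (-(5 * (1 + s))) * ratBound (5 * (1 + s)))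
          * (5 * (1 + s) + 1) - Real.exp (-5) := by gcongr
    _ = Real.exp (-5) * ((5 * (1 + s) + 1) * ratBound (5 * (1 + s)) - 1) := by
        rw [← he]
        ring
    _ ≤ Real.exp (-5) * (71 / 3145) := by gcongr
    _ < _ := exp_neg_five_mul_lt

lemma f1_five_halves_gt {σ : ℝ} (hσ : 0 < σ) : -(1 / 6500) < f1 σ (5 / 2) := by
  have hd : ∀ s : ℝ, 0 ≤ s → HasDerivAt (fun y => 1 / 6500 * y - slopeFun y)
      (1 / 6500 * 1 - (Real.exp (5 * s) * expInt (5 * (1 + s)) * (5 * (1 + s) + 1)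
        - Real.exp (-5))) s := fun s hs =>
    ((hasDerivAt_id s).const_mul (1 / 6500)).sub (hasDerivAt_slopeFun (by linarith))
  have hmono : StrictMonoOn (fun y => 1 / 6500 * y - slopeFun y) (Set.Ici 0) := by
    refine strictMonoOn_of_deriv_pos (convex_Ici 0)
      (fun y hy => (hd y hy).continuousAt.continuousWithinAt) ?_
    intro y hy
    rw [interior_Ici] at hy
    have hy' : 0 ≤ y := le_of_lt hy
    rw [(hd y hy').deriv]
    linarith [slopeFun_deriv_lt hy']
  have h := hmono (Set.mem_Ici.mpr le_rfl) (Set.mem_Ici.mpr hσ.le) hσ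
  have hf : f1 σ (5 / 2) = (slopeFun 0 - slopeFun σ) / σ := by
    have e1 : 2 * σ * (5 / 2) = 5 * σ := by ring
    have e2 : 2 * (1 + σ) * (5 / 2) = 5 * (1 + σ) := by ring
    have e3 : (2 : ℝ) * (5 / 2) = 5 := by norm_num
    simp only [f1, slopeFun, e1, e2, e3]
    simp
    ring
  rw [hf, lt_div_iff₀ hσ]
  simp only [mul_zero] at h
  linarith

/-- For `σ ∈ (0,1]`: `f₁'(r) = e^{-2r}/r - 2(1+σ) e^{2σr} E(2(1+σ)r) > 0` on `(0,∞)`, so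
`f₁` is strictly increasing there, and `-1/6500 < f₁(r) < 0` for `r ≥ 5/2`. -/
theorem f1_deriv_pos_and_bounds (σ : ℝ) (hσ : σ ∈ Set.Ioc (0:ℝ) 1) :
    (∀ r > (0:ℝ),
      deriv (f1 σ) r =
        Real.exp (-2 * r) / r
          - 2 * (1 + σ) * Real.exp (2 * σ * r) * expInt (2 * (1 + σ) * r) ∧
      0 < deriv (f1 σ) r) ∧
    StrictMonoOn (f1 σ) (Set.Ioi 0) ∧
    ∀ r : ℝ, 5 / 2 ≤ r → -(1 / 6500) < f1 σ r ∧ f1 σ r < 0 := by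
  obtain ⟨h0, -⟩ := hσ
  refine ⟨fun r hr => ?_, strictMonoOn_f1 h0, fun r hr => ⟨?_, f1_neg h0 (by linarith)⟩⟩
  · rw [(hasDerivAt_f1 h0 hr).deriv]
    exact ⟨rfl, sub_pos.mpr (exp_mul_expInt_lt h0 hr)⟩
  · refine (f1_five_halves_gt h0).trans_le ((strictMonoOn_f1 h0).monotoneOn ?_ ?_ hr)
    · simp
    · simp only [Set.mem_Ioi]
      linarith
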